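/- Let K be a p-adic field containing μ_p and κ = 1 + u·π_K^n with u a unit, 1 ≤ n < p·e_K/(p−1), and n not divisible by p. Then L = K(κ^{1/p}) is totally ramified of degree p over K with abelian conductor exponent f(L/K) = p·e_K/(p−1) − n + 1. -/

import Mathlib

universe v

/-- An (additive) normalized discrete valuation on `K`. -/
def IsNormalizedVal (p : ℕ) (K : Type*) [Field K] (v : K → ℤ) : Prop :=
  (∀ x y : K, x ≠ 0 → y ≠ 0 → v (x * y) = v x + v y) ∧
  (∀ x y : K, x ≠ 0 → y ≠ 0 → x + y ≠ 0 → min (v x) (v y) ≤ v (x + y)) ∧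
  (∃ π : K, π ≠ 0 ∧ v π = 1) ∧
  (0 < v ((p : K)))

/-- The abelian conductor exponent of `L/K`, defined via norm groups. -/
noncomputable def condExp {K : Type*} [Field K] (vK : K → ℤ)
    (L : Type v) [Field L] [Algebra K L] : ℕ :=
  sInf {n : ℕ | ∀ u : K, u ≠ 0 → vK u = 0 →
    (n = 0 ∨ u = 1 ∨ (n : ℤ) ≤ vK (u - 1)) →
      ∃ x : L, x ≠ 0 ∧ Algebra.norm K x = u}

/-!
Put `a = κ - 1`, `t = p * v(ζ - 1) - v(a)` and let `𝔭` be the maximal ideal. The equation for `θ`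
gives `p * v_L(θ - 1) = e * v(a)` with `p ∤ v(a)`, so `p ∣ e ≤ [L : K] ≤ p` and `L / K` is totally
ramified of degree `p`.

The norm of `(c - θ) / (1 - θ)` is `1 - (c ^ p - 1) / a`. Every element of `1 + 𝔭 ^ (v(a) + t + 1)`
is a `p`-th power by successive approximation, so every element of `1 + 𝔭 ^ (t + 1)` is a norm.

Conversely, the bound `Tr (𝔭_L ^ m) ⊆ 𝔭_L ^ (m + (p - 1) * t)` and Newton's identities give
`N(1 + z) ≡ 1 + N(z)` modulo `𝔭_L ^ (m + (p - 1) * t)` for `z ∈ 𝔭_L ^ m`. Hence an `x` with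
`N(x) ∈ 1 + 𝔭 ^ t` lies in `1 + 𝔭_L ^ t`, so it is congruent modulo `𝔭_L ^ (t + 1)` to
`(1 + (ζ - 1) * c - θ) / (1 - θ)` for some integral `c`, and `N(x)` modulo `𝔭 ^ (t + 1)` is read off
from `(1 + (ζ - 1) * c) ^ p`. This expression takes the same value at `c = 0` and `c = 1`, so by
finiteness of the residue field it misses some class, and `1 + 𝔭 ^ t` is not contained in the norm
group.
-/

theorem exists_one_add_pow_prime_eq {p : ℕ} (hp : p.Prime) {R : Type*} [CommRing R] (x : R) :
    ∃ r, (1 + x) ^ p = 1 + p * x + p * x ^ 2 * r + x ^ p := by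
  obtain ⟨q, rfl⟩ := Nat.exists_eq_add_of_le' hp.two_le
  have hdvd : ((q + 2 : ℕ) * x ^ 2 : R) ∣
      ∑ k ∈ Finset.range q, x ^ (k + 2) * (q + 2).choose (k + 2) := by
    refine Finset.dvd_sum fun k hk => ?_
    rw [Finset.mem_range] at hk
    rw [mul_comm]
    exact mul_dvd_mul (pow_dvd_pow x (by omega))
      (Nat.cast_dvd_cast (hp.dvd_choose_self (by omega) (by omega)))
  obtain ⟨r, hr⟩ := hdvd
  refine ⟨r, ?_⟩
  rw [← hr, add_comm 1 x, add_pow, Finset.sum_range_succ, Finset.sum_range_succ',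
    Finset.sum_range_succ']
  simp only [one_pow, mul_one, Nat.choose_self, Nat.choose_zero_right, Nat.choose_one_right,
    zero_add, pow_zero, pow_one, Nat.cast_one, add_assoc, Nat.reduceAdd]
  ring

theorem exists_forall_sub_notMem_of_isFiniteRelIndex {G : Type*} [AddCommGroup G]
    {A B : AddSubgroup G} [B.IsFiniteRelIndex A] {φ : G → G} (hφA : ∀ x ∈ A, φ x ∈ A)
    (hφ : ∀ x ∈ A, ∀ y ∈ A, x - y ∈ B → φ x - φ y ∈ B) {x y : G} (hx : x ∈ A) (hy : y ∈ A)
    (hxy : x - y ∉ B) (hφxy : φ x - φ y ∈ B) : ∃ z ∈ A, ∀ c ∈ A, φ c - z ∉ B := by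
  have : Finite (A ⧸ B.addSubgroupOf A) := inferInstance
  have mk_eq_iff : ∀ a b : A, (a : A ⧸ B.addSubgroupOf A) = b ↔ (a - b : G) ∈ B := fun a b => by
    rw [← sub_eq_zero, ← QuotientAddGroup.mk_sub, QuotientAddGroup.eq_zero_iff]
    rfl
  let ψ : A ⧸ B.addSubgroupOf A → A ⧸ B.addSubgroupOf A :=
    Quotient.map' (fun c => ⟨φ c, hφA c c.2⟩) fun a b hab => Quotient.exact <|
      (mk_eq_iff _ _).mpr <| hφ a a.2 b b.2 <| (mk_eq_iff a b).mp (Quotient.sound hab)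
  have hinj : ¬ Function.Injective ψ := fun h =>
    hxy ((mk_eq_iff ⟨x, hx⟩ ⟨y, hy⟩).mp (h ((mk_eq_iff _ _).mpr hφxy)))
  have hsurj : ¬ Function.Surjective ψ := mt Finite.injective_iff_surjective.mpr hinj
  obtain ⟨z, hz⟩ := not_forall.mp hsurj
  induction z using QuotientAddGroup.induction_on with
  | H z => exact ⟨z, z.2, fun c hc h => hz ⟨(⟨c, hc⟩ : A), (mk_eq_iff _ _).mpr h⟩⟩

theorem exists_zpow_eq_inv {x : ℝ} (hx : 1 < x) {e : ℤ} (he : 0 < e) :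
    ∃ r : ℝ, 0 < r ∧ r < 1 ∧ r ^ e = x⁻¹ := by
  have he' : (0 : ℝ) < e := mod_cast he
  refine ⟨x ^ (-(1 / (e : ℝ))), by positivity, ?_, ?_⟩
  · exact Real.rpow_lt_one_of_one_lt_of_neg hx (by simpa using he)
  · rw [← Real.rpow_intCast, ← Real.rpow_mul (by positivity), neg_mul,
      one_div_mul_cancel he'.ne', Real.rpow_neg_one]

section KummerTheory

open Polynomial IntermediateField Module

variable {K L : Type*} [Field K] [Field L] [Algebra K L]

theorem norm_algebraMap_sub_gen_eq_eval_minpoly (pb : PowerBasis K L) (c : K) :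
    Algebra.norm K (algebraMap K L c - pb.gen) = (minpoly K pb.gen).eval c := by
  rw [Algebra.norm_eq_matrix_det pb.basis, ← charpoly_leftMulMatrix, Matrix.eval_charpoly, map_sub,
    AlgHom.commutes]
  rfl

variable {n : ℕ} {κ : K} {θ : L} (hadj : K⟮θ⟯ = ⊤)
include hadj

theorem finiteDimensional_and_finrank_le_of_pow_eq (hn : n ≠ 0) (hθ : θ ^ n = algebraMap K L κ) :
    FiniteDimensional K L ∧ finrank K L ≤ n := by
  have hroot : aeval θ (X ^ n - C κ) = 0 := by simp [hθ]
  have hint : IsIntegral K θ := ⟨X ^ n - C κ, monic_X_pow_sub_C κ hn, hroot⟩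
  have hfd : FiniteDimensional K K⟮θ⟯ := adjoin.finiteDimensional hint
  have hrank := adjoin.finrank hint
  rw [hadj] at hfd hrank
  refine ⟨topEquiv.toLinearEquiv.finiteDimensional, ?_⟩
  rw [← finrank_top', hrank, ← natDegree_X_pow_sub_C (n := n) (r := κ)]
  exact natDegree_le_of_dvd (minpoly.dvd K θ hroot) (X_pow_sub_C_ne_zero (Nat.pos_of_ne_zero hn) κ)

variable [FiniteDimensional K L] (hθ : θ ^ finrank K L = algebraMap K L κ)
include hθ

theorem norm_algebraMap_sub_of_pow_finrank_eq (c : K) :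
    Algebra.norm K (algebraMap K L c - θ) = c ^ finrank K L - κ := by
  have hminpoly : X ^ finrank K L - C κ = minpoly K θ :=
    minpoly.eq_of_irreducible_of_monic (irreducible_X_pow_sub_C_of_root_adjoin_eq_top hθ hadj)
      (by simp [hθ]) (monic_X_pow_sub_C κ finrank_pos.ne')
  let pb : PowerBasis K L :=
    (adjoin.powerBasis (IsIntegral.of_finite K θ)).map ((equivOfEq hadj).trans topEquiv)
  have hgen : pb.gen = θ := by simp [pb]
  simpa [hgen, ← hminpoly] using norm_algebraMap_sub_gen_eq_eval_minpoly pb c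

variable {ζ : K} (hζ : IsPrimitiveRoot ζ (finrank K L))
include hζ

theorem isGalois_of_pow_finrank_eq : IsGalois K L := by
  have hprim : (primitiveRoots (finrank K L) K).Nonempty :=
    ⟨ζ, (mem_primitiveRoots finrank_pos).mpr hζ⟩
  have hsplit := isSplittingField_X_pow_sub_C_of_root_adjoin_eq_top hprim hθ hadj
  exact isGalois_of_isSplittingField_X_pow_sub_C hprim
    (irreducible_X_pow_sub_C_of_root_adjoin_eq_top hθ hadj) L

theorem exists_algEquiv_apply_eq_smul : ∃ σ : Gal(L/K), σ θ = ζ • θ := by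
  have hprim : (primitiveRoots (finrank K L) K).Nonempty :=
    ⟨ζ, (mem_primitiveRoots finrank_pos).mpr hζ⟩
  have hsplit := isSplittingField_X_pow_sub_C_of_root_adjoin_eq_top hprim hθ hadj
  have hirr := irreducible_X_pow_sub_C_of_root_adjoin_eq_top hθ hadj
  have : NeZero (finrank K L) := ⟨finrank_pos.ne'⟩
  exact ⟨_, by simpa using autEquivZmod_symm_apply_natCast hirr L hθ hζ 1⟩

theorem trace_pow_eq_zero_of_pow_finrank_eq {j : ℕ} (hj0 : j ≠ 0) (hj : j < finrank K L) :
    Algebra.trace K L (θ ^ j) = 0 := by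
  obtain ⟨σ, hσ⟩ := exists_algEquiv_apply_eq_smul hadj hθ hζ
  have hinv : ζ ^ j * Algebra.trace K L (θ ^ j) = Algebra.trace K L (θ ^ j) := by
    rw [← smul_eq_mul, ← map_smul, ← _root_.smul_pow, ← hσ, ← map_pow]
    exact Algebra.trace_eq_of_algEquiv σ _
  by_contra htrace
  exact hζ.pow_ne_one_of_pos_of_lt hj0 hj ((mul_eq_right₀ htrace).mp hinv)

theorem trace_sub_one_pow_of_pow_finrank_eq {i : ℕ} (hi : i < finrank K L) :
    Algebra.trace K L ((θ - 1) ^ i) = (-1) ^ i * finrank K L := by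
  rw [sub_eq_add_neg, add_pow, Finset.sum_range_succ', map_add, map_sum, Finset.sum_eq_zero]
  · have hconst : Algebra.trace K L ((-1) ^ i) = (-1) ^ i * finrank K L := by
      simpa [mul_comm] using Algebra.trace_algebraMap (S := L) ((-1 : K) ^ i)
    simpa using hconst
  · intro k hk
    rw [Finset.mem_range] at hk
    have hscalar : θ ^ (k + 1) * (-1) ^ (i - (k + 1)) * (i.choose (k + 1) : L) =
        ((-1) ^ (i - (k + 1)) * (i.choose (k + 1) : K)) • θ ^ (k + 1) := by
      rw [Algebra.smul_def]
      push_cast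
      ring
    rw [hscalar, map_smul,
      trace_pow_eq_zero_of_pow_finrank_eq hadj hθ hζ k.succ_ne_zero (by omega), smul_zero]

end KummerTheory

/-- The valuation `vL` restricts to `e` times the valuation `vK`, that is, it extends `vK` with
ramification index `e`; total ramification is the case `e = [L : K]`. -/
def HasRamificationIdx {K L : Type*} [Field K] [Field L] [Algebra K L] (vK : K → ℤ) (vL : L → ℤ)
    (e : ℤ) : Prop :=
  ∀ x : K, x ≠ 0 → vL (algebraMap K L x) = e * vK x

namespace IsNormalizedVal

section Basic

variable {p : ℕ} {F : Type*} [Field F] {v : F → ℤ} (hv : IsNormalizedVal p F v)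
include hv

theorem map_mul {x y : F} (hx : x ≠ 0) (hy : y ≠ 0) : v (x * y) = v x + v y :=
  hv.1 x y hx hy

theorem map_one : v 1 = 0 := by
  have := hv.map_mul (one_ne_zero (α := F)) one_ne_zero
  rw [mul_one] at this
  omega

theorem map_pow {x : F} (hx : x ≠ 0) (k : ℕ) : v (x ^ k) = k * v x := by
  induction k with
  | zero => simp [hv.map_one]
  | succ k ih =>
    rw [pow_succ, hv.map_mul (pow_ne_zero _ hx) hx, ih]
    push_cast
    ring

theorem map_inv {x : F} (hx : x ≠ 0) : v x⁻¹ = -v x := by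
  have := hv.map_mul hx (inv_ne_zero hx)
  rw [mul_inv_cancel₀ hx, hv.map_one] at this
  omega

theorem map_neg {x : F} (hx : x ≠ 0) : v (-x) = v x := by
  have hsq := hv.map_mul (neg_ne_zero.mpr hx) (neg_ne_zero.mpr hx)
  rw [neg_mul_neg, hv.map_mul hx hx] at hsq
  omega

theorem map_div {x y : F} (hx : x ≠ 0) (hy : y ≠ 0) : v (x / y) = v x - v y := by
  rw [div_eq_mul_inv, hv.map_mul hx (inv_ne_zero hy), hv.map_inv hy, sub_eq_add_neg]

theorem map_zpow {x : F} (hx : x ≠ 0) (k : ℤ) : v (x ^ k) = k * v x := by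
  cases k with
  | ofNat k => simpa using hv.map_pow hx k
  | negSucc k =>
    rw [zpow_negSucc, hv.map_inv (pow_ne_zero _ hx), hv.map_pow hx, Int.negSucc_eq]
    push_cast
    ring

theorem map_prod {ι : Type*} (s : Finset ι) {f : ι → F} (hf : ∀ i ∈ s, f i ≠ 0) :
    v (∏ i ∈ s, f i) = ∑ i ∈ s, v (f i) := by
  classical
  induction s using Finset.induction_on with
  | empty => simpa using hv.map_one
  | insert i s hi ih =>
    rw [Finset.forall_mem_insert] at hf
    rw [Finset.prod_insert hi, Finset.sum_insert hi,
      hv.map_mul hf.1 (Finset.prod_ne_zero_iff.mpr hf.2), ih hf.2]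

/-- The fractional ideal `𝔭 ^ m` of elements of valuation at least `m`. Zero is admitted
separately, since `v 0` carries no meaning. -/
def fracIdeal (m : ℤ) : AddSubgroup F where
  carrier := {x | x ≠ 0 → m ≤ v x}
  zero_mem' h := absurd rfl h
  add_mem' {x y} hx hy hxy := by
    by_cases hx0 : x = 0
    · simpa [hx0] using hy (by simpa [hx0] using hxy)
    by_cases hy0 : y = 0
    · simpa [hy0] using hx hx0
    exact (le_min (hx hx0) (hy hy0)).trans (hv.2.1 x y hx0 hy0 hxy)
  neg_mem' {x} hx hx0 := by
    rw [neg_ne_zero] at hx0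
    exact (hx hx0).trans_eq (hv.map_neg hx0).symm

theorem mem_fracIdeal {m : ℤ} {x : F} : x ∈ hv.fracIdeal m ↔ (x ≠ 0 → m ≤ v x) :=
  Iff.rfl

variable {hv}

variable (hv) in
theorem mem_self (x : F) : x ∈ hv.fracIdeal (v x) :=
  fun _ => le_rfl

theorem mem_of_le {m : ℤ} {x : F} (hx : m ≤ v x) : x ∈ hv.fracIdeal m :=
  fun _ => hx

theorem mem_mono {m k : ℤ} {x : F} (hx : x ∈ hv.fracIdeal m) (hkm : k ≤ m) :
    x ∈ hv.fracIdeal k :=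
  fun hx0 => hkm.trans (hx hx0)

theorem mul_mem {m k : ℤ} {x y : F} (hx : x ∈ hv.fracIdeal m) (hy : y ∈ hv.fracIdeal k) :
    x * y ∈ hv.fracIdeal (m + k) := by
  intro hxy
  have hx0 := left_ne_zero_of_mul hxy
  have hy0 := right_ne_zero_of_mul hxy
  rw [hv.map_mul hx0 hy0]
  exact add_le_add (hx hx0) (hy hy0)

theorem div_mem {m : ℤ} {x y : F} (hx : x ∈ hv.fracIdeal m) (hy : y ≠ 0) :
    x / y ∈ hv.fracIdeal (m - v y) := by
  rw [div_eq_mul_inv, sub_eq_add_neg]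
  exact mul_mem hx (mem_of_le (hv.map_inv hy).ge)

theorem one_mem : (1 : F) ∈ hv.fracIdeal 0 :=
  mem_of_le hv.map_one.ge

theorem pow_mem {m : ℤ} {x : F} (hx : x ∈ hv.fracIdeal m) (k : ℕ) :
    x ^ k ∈ hv.fracIdeal (k * m) := by
  intro hxk
  rcases k.eq_zero_or_pos with rfl | hk
  · simp [hv.map_one]
  have hx0 : x ≠ 0 := (pow_ne_zero_iff hk.ne').mp hxk
  rw [hv.map_pow hx0]
  exact mul_le_mul_of_nonneg_left (hx hx0) (Int.natCast_nonneg k)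

theorem neg_one_pow_mul_mem {m : ℤ} {x : F} (hx : x ∈ hv.fracIdeal m) (k : ℕ) :
    (-1) ^ k * x ∈ hv.fracIdeal m := by
  rcases neg_one_pow_eq_or F k with h | h <;> simpa [h] using hx

theorem prod_mem {ι : Type*} {m : ℤ} (s : Finset ι) {f : ι → F}
    (hf : ∀ i ∈ s, f i ∈ hv.fracIdeal m) : ∏ i ∈ s, f i ∈ hv.fracIdeal (s.card * m) := by
  intro hs
  have hf0 := Finset.prod_ne_zero_iff.mp hs
  rw [hv.map_prod s hf0, ← nsmul_eq_mul]
  exact Finset.card_nsmul_le_sum s _ m fun i hi => hf i hi (hf0 i hi)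

theorem mul_mem_iff {m : ℤ} {x y : F} (hx : x ≠ 0) :
    x * y ∈ hv.fracIdeal (v x + m) ↔ y ∈ hv.fracIdeal m := by
  refine ⟨fun h => ?_, mul_mem (hv.mem_self x)⟩
  simpa [hx] using div_mem h hx

theorem eq_zero_of_forall_mem {x : F} (h : ∀ m, x ∈ hv.fracIdeal m) : x = 0 := by
  by_contra hx
  have := h (v x + 1) hx
  omega

theorem ne_zero_of_notMem {m : ℤ} {x : F} (hx : x ∉ hv.fracIdeal m) : x ≠ 0 :=
  fun h => hx (h ▸ zero_mem _)

theorem lt_of_notMem {m : ℤ} {x : F} (hx : x ∉ hv.fracIdeal m) : v x < m :=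
  not_le.mp fun h => hx (mem_of_le h)

theorem map_eq_of_sub_mem {x y : F} (hx : x ≠ 0) (h : y - x ∈ hv.fracIdeal (v x + 1)) :
    y ≠ 0 ∧ v y = v x := by
  have hxmem : x ∉ hv.fracIdeal (v x + 1) := fun hmem => by
    have := hmem hx
    omega
  have hymem : y ∉ hv.fracIdeal (v x + 1) := fun hmem =>
    hxmem (by simpa using sub_mem hmem h)
  have hle : y ∈ hv.fracIdeal (v x) := by
    simpa using add_mem (mem_mono h (by omega)) (hv.mem_self x)
  have hy0 := ne_zero_of_notMem hymem
  have := lt_of_notMem hymem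
  have := hle hy0
  exact ⟨hy0, by omega⟩

theorem map_eq_zero_of_sub_one_mem {x : F} (h : x - 1 ∈ hv.fracIdeal 1) : x ≠ 0 ∧ v x = 0 := by
  simpa [hv.map_one] using
    map_eq_of_sub_mem (hv := hv) (one_ne_zero (α := F)) (by simpa [hv.map_one])

theorem mem_of_sum_mem_of_injOn {ι : Type*} {s : Finset ι} {f : ι → F}
    (hinj : Set.InjOn (fun i => v (f i)) {i | i ∈ s ∧ f i ≠ 0}) {m : ℤ}
    (hsum : ∑ i ∈ s, f i ∈ hv.fracIdeal m) {i : ι} (hi : i ∈ s) : f i ∈ hv.fracIdeal m := by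
  classical
  intro hfi
  obtain ⟨j, hj, hmin⟩ := Finset.exists_min_image ({i ∈ s | f i ≠ 0}) (fun i => v (f i))
    ⟨i, Finset.mem_filter.mpr ⟨hi, hfi⟩⟩
  rw [Finset.mem_filter] at hj
  refine le_trans ?_ (hmin i (Finset.mem_filter.mpr ⟨hi, hfi⟩))
  have hrest : ∑ k ∈ s.erase j, f k ∈ hv.fracIdeal (v (f j) + 1) := by
    refine sum_mem fun k hk hfk => ?_
    rw [Finset.mem_erase] at hk
    have hle := hmin k (Finset.mem_filter.mpr ⟨hk.2, hfk⟩)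
    have hne : v (f k) ≠ v (f j) := fun h => hk.1 (hinj ⟨hk.2, hfk⟩ hj h)
    omega
  obtain ⟨hsum0, hval⟩ : ∑ k ∈ s, f k ≠ 0 ∧ v (∑ k ∈ s, f k) = v (f j) := by
    refine map_eq_of_sub_mem (hv := hv) hj.2 ?_
    rwa [← Finset.add_sum_erase s f hj.1, add_sub_cancel_left]
  exact hval ▸ hsum hsum0

variable (hv)

/-- The valuation ring; as a set it is `hv.fracIdeal 0`. -/
def integers : Subring F where
  __ := hv.fracIdeal 0
  one_mem' := one_mem
  mul_mem' hx hy := by simpa using mul_mem (m := 0) (k := 0) hx hy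

variable {hv}

theorem intCast_mem (k : ℤ) : (k : F) ∈ hv.fracIdeal 0 :=
  _root_.intCast_mem hv.integers k

theorem natCast_mem (k : ℕ) : (k : F) ∈ hv.fracIdeal 0 :=
  _root_.natCast_mem hv.integers k

end Basic

section ResidueCharacteristic

variable {p : ℕ} [hp : Fact p.Prime] {F : Type*} [Field F] {v : F → ℤ}
  {hv : IsNormalizedVal p F v}

theorem map_natCast_eq_zero (hv : IsNormalizedVal p F v) {k : ℕ} (hk0 : k ≠ 0) (hkp : k < p) :
    (k : F) ≠ 0 ∧ v k = 0 := by
  obtain ⟨a, b, hab⟩ : IsCoprime (k : ℤ) p :=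
    Nat.isCoprime_iff_coprime.mpr (Nat.coprime_of_lt_prime hk0 hkp hp.out).symm
  have hinv : (a : F) * k - 1 ∈ hv.fracIdeal 1 := by
    have hbp : (-b : ℤ) * (p : F) ∈ hv.fracIdeal 1 := by
      simpa only [zero_add] using mul_mem (intCast_mem _) (mem_of_le hv.2.2.2)
    convert hbp using 1
    have : (a * k + b * p : F) = 1 := mod_cast congrArg (Int.cast (R := F)) hab
    push_cast
    linear_combination this
  obtain ⟨hak0, hak⟩ := map_eq_zero_of_sub_one_mem hinv
  obtain ⟨ha0, hkF⟩ := mul_ne_zero_iff.mp hak0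
  rw [hv.map_mul ha0 hkF] at hak
  have hva : 0 ≤ v a := intCast_mem (hv := hv) a ha0
  have hvk : 0 ≤ v k := natCast_mem (hv := hv) k hkF
  exact ⟨hkF, by omega⟩

theorem one_add_pow_prime_sub_mem {x : F} {j : ℤ} (hj : 0 ≤ j) (hx : x ∈ hv.fracIdeal j) :
    (1 + x) ^ p - (1 + p * x + x ^ p) ∈ hv.fracIdeal (v p + 2 * j) := by
  obtain ⟨r, hr⟩ := exists_one_add_pow_prime_eq hp.out (⟨x, mem_mono hx hj⟩ : hv.integers)
  have hr' : (1 + x) ^ p = 1 + p * x + p * x ^ 2 * r + x ^ p := congrArg Subtype.val hr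
  have hmem : p * x ^ 2 * r ∈ hv.fracIdeal (v p + 2 * j) := by
    simpa only [add_zero, Nat.cast_ofNat] using mul_mem (mul_mem (hv.mem_self p) (pow_mem hx 2)) r.2
  convert hmem using 1
  rw [hr']
  ring

theorem pow_prime_sub_pow_mem {s j : ℤ} (hs : v (p : F) = (p - 1) * s) (hsj : s ≤ j) {x y : F}
    (hx : x ∈ hv.fracIdeal 0) (hy : y ∈ hv.fracIdeal 0) (hxy : x - y ∈ hv.fracIdeal j) :
    x ^ p - y ^ p ∈ hv.fracIdeal ((p - 1) * s + j) := by
  obtain ⟨r, hr⟩ := exists_add_pow_prime_eq hp.out (⟨y, hy⟩ : hv.integers) (⟨x, hx⟩ - ⟨y, hy⟩)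
  have hr' : (y + (x - y)) ^ p = y ^ p + (x - y) ^ p + p * y * (x - y) * r :=
    congrArg Subtype.val hr
  have hpow : (x - y) ^ p ∈ hv.fracIdeal ((p - 1) * s + j) := by
    refine mem_mono (pow_mem hxy p) ?_
    have : (1 : ℤ) ≤ p := mod_cast hp.out.one_le
    nlinarith
  have hmixed : p * y * (x - y) * r ∈ hv.fracIdeal ((p - 1) * s + j) := by
    simpa using mul_mem (mul_mem (mul_mem (mem_of_le hs.ge) hy) hxy) r.2
  convert add_mem hpow hmixed using 1
  rw [add_sub_cancel] at hr'
  linear_combination hr'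

theorem exists_pow_prime_sub_mem {s j : ℤ} (hp0 : (p : F) ≠ 0) (hs : v (p : F) = (p - 1) * s)
    (hs0 : 0 ≤ s) (hj : 1 ≤ j) {d : F} (hd : d ∈ hv.fracIdeal (p * s + j)) :
    ∃ f ∈ hv.fracIdeal (s + j), (1 + f) ^ p - (1 + d) ∈ hv.fracIdeal (p * s + j + 1) := by
  have hp2 : (2 : ℤ) ≤ p := mod_cast hp.out.two_le
  have hf : d / p ∈ hv.fracIdeal (s + j) := mem_mono (div_mem hd hp0) (by linarith)
  refine ⟨d / p, hf, ?_⟩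
  have hbinom :=
    mem_mono (k := p * s + j + 1) (one_add_pow_prime_sub_mem (by omega) hf) (by linarith)
  have hpow := mem_mono (k := p * s + j + 1) (pow_mem hf p) (by nlinarith)
  rw [mul_div_cancel₀ _ hp0] at hbinom
  convert add_mem hbinom hpow using 1
  ring

theorem exists_pow_prime_sub_one_add_mem {s : ℤ} (hp0 : (p : F) ≠ 0)
    (hs : v (p : F) = (p - 1) * s) (hs0 : 0 ≤ s) {w : F} (hw : w ∈ hv.fracIdeal (p * s + 1))
    (N : ℕ) : ∃ c, c - 1 ∈ hv.fracIdeal 1 ∧ c ^ p - (1 + w) ∈ hv.fracIdeal (p * s + 1 + N) := by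
  induction N with
  | zero => exact ⟨1, by simp, by simpa using hw⟩
  | succ N ih =>
    obtain ⟨c, hc, hcN⟩ := ih
    obtain ⟨hc0, hvc⟩ := map_eq_zero_of_sub_one_mem hc
    have hcp : v (c ^ p) = 0 := by rw [hv.map_pow hc0, hvc, mul_zero]
    have hd : -(c ^ p - (1 + w)) / c ^ p ∈ hv.fracIdeal (p * s + (1 + N)) := by
      simpa [hcp, add_assoc] using div_mem (neg_mem hcN) (pow_ne_zero p hc0)
    obtain ⟨f, hf, hfd⟩ := exists_pow_prime_sub_mem hp0 hs hs0 (by omega) hd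
    refine ⟨c * (1 + f), ?_, ?_⟩
    · convert add_mem hc (mem_mono (mul_mem (hv.mem_self c) hf) (by omega)) using 1
      ring
    · convert mem_mono (k := p * s + 1 + (N + 1 : ℕ)) (mul_mem (hv.mem_self (c ^ p)) hfd)
        (by push_cast; omega) using 1
      rw [mul_pow]
      field_simp
      ring

theorem map_sub_one_of_pow_prime_eq {S : ℤ} (hv : IsNormalizedVal p F v)
    (hS : v (p : F) = (p - 1) * S) {a θ : F} (ha : a ≠ 0) (ha0 : 0 ≤ v a) (haS : v a < p * S)
    (hθ : θ ^ p = 1 + a) : θ - 1 ≠ 0 ∧ p * v (θ - 1) = v a := by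
  have hp2 : (2 : ℤ) ≤ p := mod_cast hp.out.two_le
  have hθ0 : θ ∈ hv.fracIdeal 0 := by
    intro hθ0
    have hpow : θ ^ p ∈ hv.fracIdeal 0 := hθ ▸ add_mem one_mem (mem_of_le ha0)
    have := hpow (pow_ne_zero _ hθ0)
    rw [hv.map_pow hθ0] at this
    exact nonneg_of_mul_nonneg_right this (by omega)
  have hy0 : θ - 1 ≠ 0 := by
    intro h
    rw [sub_eq_zero.mp h, one_pow] at hθ
    exact ha (by linear_combination -hθ)
  have hy : θ - 1 ∈ hv.fracIdeal 0 := sub_mem hθ0 one_mem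
  have hylt : v (θ - 1) < S := by
    by_contra! hle
    have := pow_prime_sub_pow_mem hS le_rfl hθ0 one_mem (mem_of_le hle)
    rw [hθ, one_pow, add_sub_cancel_left] at this
    have := this ha
    linarith
  have hymem := hv.mem_self (θ - 1)
  have hbinom := one_add_pow_prime_sub_mem (hy hy0) hymem
  have hlin : p * (θ - 1) ∈ hv.fracIdeal (v (p : F) + v (θ - 1)) := mul_mem (hv.mem_self _) hymem
  refine ⟨hy0, ?_⟩
  rw [← hv.map_pow hy0]
  refine ((map_eq_of_sub_mem (hv := hv) (pow_ne_zero p hy0) ?_).2).symm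
  rw [hv.map_pow hy0]
  have hle : p * v (θ - 1) + 1 ≤ v (p : F) + v (θ - 1) := by nlinarith
  convert add_mem (mem_mono hbinom (hle.trans (by linarith [hy hy0]))) (mem_mono hlin hle) using 1
  rw [add_sub_cancel, hθ]
  ring

end ResidueCharacteristic

section RootsOfUnity

variable {p : ℕ} {F : Type*} [Field F] {v : F → ℤ} (hv : IsNormalizedVal p F v)
include hv

theorem map_eq_zero_of_pow_eq_one {k : ℕ} (hk : k ≠ 0) {x : F} (hx : x ^ k = 1) : v x = 0 := by
  have hx0 : x ≠ 0 := by
    rintro rfl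
    simp [hk] at hx
  have := hv.map_pow hx0 k
  rw [hx, hv.map_one] at this
  simpa [hk] using this

theorem map_primitiveRoot_sub_one_le {k : ℕ} (hk : 1 < k) {ζ ξ : F} (hζ : IsPrimitiveRoot ζ k)
    (hξ : IsPrimitiveRoot ξ k) : v (ζ - 1) ≤ v (ξ - 1) := by
  have : NeZero k := ⟨by omega⟩
  obtain ⟨i, -, rfl⟩ := hζ.eq_pow_of_pow_eq_one hξ.pow_eq_one
  have hζint : ζ ∈ hv.integers :=
    mem_of_le (hv := hv) (hv.map_eq_zero_of_pow_eq_one (by omega) hζ.pow_eq_one).ge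
  have hgeom : ∑ j ∈ Finset.range i, ζ ^ j ∈ hv.fracIdeal 0 :=
    sum_mem fun j _ => _root_.pow_mem hζint j
  have hξ0 : ζ ^ i - 1 ≠ 0 := sub_ne_zero.mpr (hξ.ne_one hk)
  have hmul := mul_mem hgeom (hv.mem_self (ζ - 1))
  rw [geom_sum_mul, zero_add] at hmul
  exact hmul hξ0

theorem map_primitiveRoot_sub_one_eq {k : ℕ} (hk : 1 < k) {ζ ξ : F} (hζ : IsPrimitiveRoot ζ k)
    (hξ : IsPrimitiveRoot ξ k) : v (ζ - 1) = v (ξ - 1) :=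
  (hv.map_primitiveRoot_sub_one_le hk hζ hξ).antisymm (hv.map_primitiveRoot_sub_one_le hk hξ hζ)

theorem map_prime_eq_mul_map_primitiveRoot_sub_one [hp : Fact p.Prime] {ζ : F}
    (hζ : IsPrimitiveRoot ζ p) : (p : F) ≠ 0 ∧ v p = (p - 1) * v (ζ - 1) := by
  obtain ⟨q, hq⟩ := Nat.exists_eq_add_of_le' hp.out.one_le
  have hroot : ∀ i ∈ Finset.range q, IsPrimitiveRoot (ζ ^ (i + 1)) p := fun i hi =>
    hζ.pow_of_coprime _ ((Nat.coprime_of_lt_prime i.succ_ne_zero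
      (by have := Finset.mem_range.mp hi; omega) hp.out).symm)
  have hne : ∀ i ∈ Finset.range q, 1 - ζ ^ (i + 1) ≠ 0 := fun i hi =>
    sub_ne_zero.mpr ((hroot i hi).ne_one hp.out.one_lt).symm
  have hprod : ∏ i ∈ Finset.range q, (1 - ζ ^ (i + 1)) = p := by
    rw [hq] at hζ
    rw [hζ.prod_one_sub_pow_eq_order, hq]
    push_cast
    rfl
  have hval : ∀ i ∈ Finset.range q, v (1 - ζ ^ (i + 1)) = v (ζ - 1) := fun i hi => by
    rw [← hv.map_neg (hne i hi), neg_sub,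
      hv.map_primitiveRoot_sub_one_eq hp.out.one_lt hζ (hroot i hi)]
  refine ⟨hprod ▸ Finset.prod_ne_zero_iff.mpr hne, ?_⟩
  rw [← hprod, hv.map_prod _ hne, Finset.sum_congr rfl hval, hq]
  simp

theorem map_primitiveRoot_sub_one_pos [hp : Fact p.Prime] {ζ : F} (hζ : IsPrimitiveRoot ζ p) :
    0 < v (ζ - 1) := by
  have hp2 : (2 : ℤ) ≤ p := mod_cast hp.out.two_le
  have hpos := hv.2.2.2
  rw [(hv.map_prime_eq_mul_map_primitiveRoot_sub_one hζ).2] at hpos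
  exact pos_of_mul_pos_right hpos (by omega)

end RootsOfUnity

section Newton

variable {p : ℕ} {F : Type*} [Field F] {v : F → ℤ} {hv : IsNormalizedVal p F v}
  {ι : Type*} [Fintype ι]

theorem aeval_esymm_mem {m : ℤ} {f : ι → F} (hf : ∀ i, f i ∈ hv.fracIdeal m) (k : ℕ) :
    MvPolynomial.aeval f (MvPolynomial.esymm ι F k) ∈ hv.fracIdeal (k * m) := by
  rw [MvPolynomial.esymm, map_sum]
  refine sum_mem fun t ht => ?_
  rw [_root_.map_prod, ← (Finset.mem_powersetCard.mp ht).2]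
  exact prod_mem t fun i _ => by simpa using hf i

theorem aeval_esymm_mem_of_sum_pow_mem [Fact p.Prime] {m d : ℤ} {f : ι → F}
    (hf : ∀ i, f i ∈ hv.fracIdeal m)
    (hsum : ∀ b : ℕ, 0 < b → ∑ i, f i ^ b ∈ hv.fracIdeal (b * m + d)) {k : ℕ} (hk : 0 < k)
    (hkp : k < p) :
    MvPolynomial.aeval f (MvPolynomial.esymm ι F k) ∈ hv.fracIdeal (k * m + d) := by
  obtain ⟨hk0, hvk⟩ := hv.map_natCast_eq_zero hk.ne' hkp
  have hnewton := congrArg (MvPolynomial.aeval f) (MvPolynomial.mul_esymm_eq_sum ι F k)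
  simp only [_root_.map_mul, map_natCast, _root_.map_pow, _root_.map_neg, _root_.map_one, map_sum,
    MvPolynomial.psum, MvPolynomial.aeval_X] at hnewton
  have hmem : k * MvPolynomial.aeval f (MvPolynomial.esymm ι F k) ∈ hv.fracIdeal (k * m + d) := by
    rw [hnewton]
    refine neg_one_pow_mul_mem (sum_mem fun a ha => ?_) _
    obtain ⟨hak, hlt⟩ := Finset.mem_filter.mp ha
    rw [Finset.HasAntidiagonal.mem_antidiagonal] at hak
    rw [mul_assoc]
    refine neg_one_pow_mul_mem ?_ _
    convert mul_mem (aeval_esymm_mem hf a.1) (hsum a.2 (by omega)) using 2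
    rw [← hak]
    push_cast
    ring
  rwa [← mul_mem_iff hk0, hvk, zero_add]

theorem prod_one_add_sub_mem [Fact p.Prime] {m d : ℤ} (hm : 0 ≤ m) (hcard : Fintype.card ι = p)
    {f : ι → F} (hf : ∀ i, f i ∈ hv.fracIdeal m)
    (hsum : ∀ b : ℕ, 0 < b → ∑ i, f i ^ b ∈ hv.fracIdeal (b * m + d)) :
    ∏ i, (1 + f i) - (1 + ∏ i, f i) ∈ hv.fracIdeal (m + d) := by
  have hesymm : ∀ k, MvPolynomial.aeval f (MvPolynomial.esymm ι F k) =
      ∑ t ∈ Finset.powersetCard k Finset.univ, ∏ i ∈ t, f i := fun k => by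
    simp [MvPolynomial.esymm]
  have hexpand : ∏ i, (1 + f i) - (1 + ∏ i, f i) =
      ∑ k ∈ Finset.range (p - 1), MvPolynomial.aeval f (MvPolynomial.esymm ι F (k + 1)) := by
    obtain ⟨q, hq⟩ := Nat.exists_eq_add_of_le' (Fact.out : p.Prime).one_le
    have hlast : Finset.powersetCard (q + 1) (Finset.univ : Finset ι) = {Finset.univ} := by
      rw [← hq, ← hcard, ← Finset.card_univ, Finset.powersetCard_self]
    simp only [hesymm]
    rw [Finset.prod_one_add, Finset.sum_powerset, Finset.card_univ, hcard, hq,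
      Finset.sum_range_succ, Finset.sum_range_succ', hlast, add_tsub_cancel_right]
    simp
  rw [hexpand]
  refine sum_mem fun k hk => ?_
  rw [Finset.mem_range] at hk
  refine mem_mono (aeval_esymm_mem_of_sum_pow_mem hf hsum k.succ_pos (by omega)) ?_
  push_cast
  nlinarith

end Newton

section PowerMap

variable {p : ℕ} [hp : Fact p.Prime] {F : Type*} [Field F] {v : F → ℤ}
  {hv : IsNormalizedVal p F v}

theorem one_add_mul_pow_prime_sub_mem {l : F} (hl : 0 ≤ v l) (hvp : v (p : F) = (p - 1) * v l)
    {j : ℤ} (hj : 0 ≤ j) {c d : F} (hc : c ∈ hv.fracIdeal 0) (hd : d ∈ hv.fracIdeal 0)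
    (hcd : c - d ∈ hv.fracIdeal j) :
    (1 + l * c) ^ p - (1 + l * d) ^ p ∈ hv.fracIdeal (p * v l + j) := by
  have hint : ∀ x ∈ hv.fracIdeal 0, 1 + l * x ∈ hv.fracIdeal 0 := fun x hx =>
    add_mem one_mem (mem_mono (mul_mem (hv.mem_self l) hx) (by omega))
  have hsub : 1 + l * c - (1 + l * d) ∈ hv.fracIdeal (v l + j) := by
    rw [add_sub_add_left_eq_sub, ← mul_sub]
    exact mul_mem (hv.mem_self l) hcd
  refine mem_mono (pow_prime_sub_pow_mem hvp (by omega) (hint c hc) (hint d hd) hsub) ?_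
  linarith

theorem exists_forall_one_add_mul_pow_sub_notMem
    [(hv.fracIdeal 1).IsFiniteRelIndex (hv.fracIdeal 0)] {ζ : F} (hζ : IsPrimitiveRoot ζ p) :
    ∃ w ∈ hv.fracIdeal (p * v (ζ - 1)), ∀ c ∈ hv.fracIdeal 0,
      (1 + (ζ - 1) * c) ^ p - (1 + w) ∉ hv.fracIdeal (p * v (ζ - 1) + 1) := by
  obtain ⟨-, hvp⟩ := hv.map_prime_eq_mul_map_primitiveRoot_sub_one hζ
  have hpos := (hv.map_primitiveRoot_sub_one_pos hζ).le
  have hl0 : ζ - 1 ≠ 0 := sub_ne_zero.mpr (hζ.ne_one hp.out.one_lt)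
  set l := ζ - 1 with hl
  have hlp0 : l ^ p ≠ 0 := pow_ne_zero p hl0
  rw [← hv.map_pow hl0 p]
  -- The `p`-th power map on `1 + 𝔭 ^ v l`, in the coordinate `c ↦ 1 + l * c`, sends both
  -- `0` and `1` to `0`.
  let φ : F → F := fun c => ((1 + l * c) ^ p - 1) / l ^ p
  have hφsub : ∀ c d, l ^ p * (φ c - φ d) = (1 + l * c) ^ p - (1 + l * d) ^ p := fun c d => by
    simp only [φ]
    field_simp
    ring
  have hφ0 : φ 0 = 0 := by simp [φ]
  have hφ1 : φ 1 = 0 := by simp [φ, hl, hζ.pow_eq_one]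
  have hφ : ∀ j : ℤ, 0 ≤ j → ∀ c ∈ hv.fracIdeal 0, ∀ d ∈ hv.fracIdeal 0,
      c - d ∈ hv.fracIdeal j → φ c - φ d ∈ hv.fracIdeal j := fun j hj c hc d hd hcd => by
    rw [← mul_mem_iff hlp0, hφsub, hv.map_pow hl0]
    exact one_add_mul_pow_prime_sub_mem hpos hvp hj hc hd hcd
  have hone : (1 : F) - 0 ∉ hv.fracIdeal 1 := fun h => by
    have := h (by simp)
    simp [hv.map_one] at this
  obtain ⟨z, hz, hφz⟩ := exists_forall_sub_notMem_of_isFiniteRelIndex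
    (fun c hc => by simpa [hφ0] using hφ 0 le_rfl c hc 0 (zero_mem _) (by simpa using hc))
    (hφ 1 zero_le_one) one_mem (zero_mem _) hone (by rw [hφ0, hφ1, sub_zero]; exact zero_mem _)
  refine ⟨l ^ p * z, by simpa using mul_mem (hv.mem_self (l ^ p)) hz, fun c hc hmem => ?_⟩
  refine hφz c hc ((mul_mem_iff hlp0).mp ?_)
  convert hmem using 1
  simp only [φ]
  field_simp
  ring

end PowerMap

section PadicBase

variable {p : ℕ} [hp : Fact p.Prime] {K : Type*} [Field K] [Algebra ℚ_[p] K] {v : K → ℤ}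
  (hv : IsNormalizedVal p K v)
include hv

-- Such a `y` has an `m`-th root for every `m` prime to `p`, so every such `m` divides `v y`.
theorem map_padicInt_eq_zero_of_norm_sub_one_lt {y : ℤ_[p]} (hy : ‖y - 1‖ < 1) :
    v (algebraMap ℚ_[p] K y) = 0 := by
  set m := p * (v (algebraMap ℚ_[p] K y)).natAbs + 1 with hm
  have hmnorm : ‖(m : ℤ_[p])‖ = 1 := by
    rw [PadicInt.norm_natCast_eq_one_iff]
    simp [hm]
  obtain ⟨z, hz, -⟩ : ∃ z : ℤ_[p], _ := hensels_lemma
    (F := (Polynomial.X ^ m - Polynomial.C y : Polynomial ℤ_[p])) (a := (1 : ℤ_[p]))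
    (by simpa [Polynomial.derivative_X_pow, hmnorm, norm_sub_rev] using hy)
  have hzy : z ^ m = y := by simpa [sub_eq_zero] using hz
  have hz0 : algebraMap ℚ_[p] K z ≠ 0 := by
    suffices z ≠ 0 by simpa using this
    rintro rfl
    rw [zero_pow (by omega)] at hzy
    simp [← hzy] at hy
  have hdvd : (m : ℤ) ∣ v (algebraMap ℚ_[p] K y) :=
    ⟨v (algebraMap ℚ_[p] K z), by rw [← hv.map_pow hz0, ← hzy, PadicInt.coe_pow, _root_.map_pow]⟩
  by_contra hne
  have hle := Nat.le_of_dvd (Int.natAbs_pos.mpr hne) (Int.natCast_dvd.mp hdvd)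
  have := hp.out.pos
  nlinarith

theorem map_padicInt_eq_zero_of_norm_eq_one {y : ℤ_[p]} (hy : ‖y‖ = 1) :
    v (algebraMap ℚ_[p] K y) = 0 := by
  have hy0 : algebraMap ℚ_[p] K y ≠ 0 := by
    suffices y ≠ 0 by simpa using this
    rintro rfl
    simp at hy
  have norm_lt_one_iff : ∀ x : ℤ_[p], ‖x‖ < 1 ↔ PadicInt.toZMod x = 0 := fun x => by
    rw [← PadicInt.mem_nonunits, ← IsLocalRing.mem_maximalIdeal, ← PadicInt.ker_toZMod,
      RingHom.mem_ker]
  have hfermat : ‖y ^ (p - 1) - 1‖ < 1 := by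
    rw [norm_lt_one_iff, map_sub, _root_.map_pow, _root_.map_one, sub_eq_zero]
    exact ZMod.pow_card_sub_one_eq_one (mt (norm_lt_one_iff y).mpr hy.not_lt)
  have hpow := hv.map_padicInt_eq_zero_of_norm_sub_one_lt hfermat
  rw [PadicInt.coe_pow, _root_.map_pow, hv.map_pow hy0] at hpow
  have hp1 : ((p - 1 : ℕ) : ℤ) ≠ 0 := mod_cast (Nat.sub_pos_of_lt hp.out.one_lt).ne'
  exact (mul_eq_zero.mp hpow).resolve_left hp1

theorem map_padic {q : ℚ_[p]} (hq : q ≠ 0) :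
    v (algebraMap ℚ_[p] K q) = v (p : K) * q.valuation := by
  have hpQ : (p : ℚ_[p]) ≠ 0 := mod_cast hp.out.ne_zero
  have hpK : (p : K) ≠ 0 := by simpa using (map_ne_zero (algebraMap ℚ_[p] K)).mpr hpQ
  have hqK : algebraMap ℚ_[p] K q ≠ 0 := by simpa using hq
  have hunit : ‖q * (p : ℚ_[p]) ^ (-q.valuation)‖ = 1 := by
    have hpR : (p : ℝ) ≠ 0 := mod_cast hp.out.ne_zero
    rw [norm_mul, Padic.norm_eq_zpow_neg_valuation hq, norm_zpow, Padic.norm_p, inv_zpow, zpow_neg,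
      inv_inv]
    exact inv_mul_cancel₀ (zpow_ne_zero _ hpR)
  have hval : v (algebraMap ℚ_[p] K (q * (p : ℚ_[p]) ^ (-q.valuation))) = 0 :=
    hv.map_padicInt_eq_zero_of_norm_eq_one (y := ⟨_, hunit.le⟩) hunit
  rw [_root_.map_mul, map_zpow₀, map_natCast, hv.map_mul hqK (zpow_ne_zero _ hpK),
    hv.map_zpow hpK] at hval
  linarith

end PadicBase

section Topology

open Topology

section AbsoluteValue

variable {p : ℕ} {K : Type*} [Field K] {v : K → ℤ} (hv : IsNormalizedVal p K v) {r : ℝ}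
  (hr0 : 0 < r) (hr1 : r < 1)

open Classical in
/-- The absolute value `r ^ v x` attached to a valuation; it makes a finite extension of `ℚ_[p]` a
proper normed space, hence the valuation ring compact. -/
noncomputable def absoluteValue : AbsoluteValue K ℝ where
  toFun x := if x = 0 then 0 else r ^ v x
  map_mul' x y := by
    by_cases hx : x = 0
    · simp [hx]
    by_cases hy : y = 0
    · simp [hy]
    simp [hx, hy, hv.map_mul hx hy, zpow_add₀ hr0.ne']
  nonneg' x := by
    split_ifs <;> positivity
  eq_zero' x := by
    by_cases hx : x = 0 <;> simp [hx, zpow_ne_zero _ hr0.ne']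
  add_le' x y := by
    by_cases hx : x = 0
    · simp [hx]
    by_cases hy : y = 0
    · simp [hy]
    have hxpos : 0 < r ^ v x := by positivity
    have hypos : 0 < r ^ v y := by positivity
    by_cases hxy : x + y = 0
    · simpa [hxy, hx, hy] using (add_pos hxpos hypos).le
    simp only [hx, hy, hxy, if_false]
    rcases min_le_iff.mp (hv.2.1 x y hx hy hxy) with h | h
    · linarith [zpow_le_zpow_right_of_le_one₀ hr0 hr1.le h]
    · linarith [zpow_le_zpow_right_of_le_one₀ hr0 hr1.le h]

theorem absoluteValue_apply {x : K} (hx : x ≠ 0) : hv.absoluteValue hr0 hr1 x = r ^ v x :=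
  if_neg hx

theorem absoluteValue_le_zpow_iff {x : K} {m : ℤ} :
    hv.absoluteValue hr0 hr1 x ≤ r ^ m ↔ x ∈ hv.fracIdeal m := by
  by_cases hx : x = 0
  · simp [hx, (zpow_pos hr0 m).le]
  rw [absoluteValue_apply hv hr0 hr1 hx, zpow_le_zpow_iff_right_of_lt_one₀ hr0 hr1, mem_fracIdeal]
  exact ⟨fun h _ => h, fun h => h hx⟩

end AbsoluteValue

variable {p : ℕ} [hp : Fact p.Prime] {K : Type*} [Field K] [Algebra ℚ_[p] K]
  [FiniteDimensional ℚ_[p] K] {v : K → ℤ} (hv : IsNormalizedVal p K v)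
include hv

theorem exists_topology_isCompact_fracIdeal :
    ∃ _ : TopologicalSpace K, IsTopologicalRing K ∧ T2Space K ∧
      IsCompact (hv.fracIdeal 0 : Set K) ∧
      (𝓝 (0 : K)).HasBasis (fun _ : ℕ => True) fun N => (hv.fracIdeal N : Set K) := by
  obtain ⟨r, hr0, hr1, hrp⟩ := exists_zpow_eq_inv (x := p) (mod_cast hp.out.one_lt) hv.2.2.2
  let _ : NormedField K := (hv.absoluteValue hr0 hr1).toNormedField
  have norm_apply : ∀ x : K, ‖x‖ = hv.absoluteValue hr0 hr1 x := fun _ => rfl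
  let _ : NormedSpace ℚ_[p] K :=
    { norm_smul_le q x := by
        by_cases hq : q = 0
        · simp [hq]
        have hqK : algebraMap ℚ_[p] K q ≠ 0 := by simpa using hq
        rw [Algebra.smul_def, norm_mul, norm_apply, absoluteValue_apply hv hr0 hr1 hqK,
          hv.map_padic hq, zpow_mul, hrp, Padic.norm_eq_zpow_neg_valuation hq, inv_zpow, zpow_neg] }
  have : ProperSpace K := FiniteDimensional.proper ℚ_[p] K
  have closedBall_eq : ∀ m : ℤ, Metric.closedBall (0 : K) (r ^ m) = hv.fracIdeal m := fun m => by
    ext x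
    rw [mem_closedBall_zero_iff, norm_apply]
    exact hv.absoluteValue_le_zpow_iff hr0 hr1
  refine ⟨inferInstance, inferInstance, inferInstance, ?_, ?_⟩
  · rw [← closedBall_eq]
    exact isCompact_closedBall _ _
  · simpa only [← closedBall_eq, zpow_natCast] using Metric.nhds_basis_closedBall_pow hr0 hr1

theorem isFiniteRelIndex_fracIdeal : (hv.fracIdeal 1).IsFiniteRelIndex (hv.fracIdeal 0) := by
  obtain ⟨_, _, -, hcompact, hbasis⟩ := hv.exists_topology_isCompact_fracIdeal
  have : CompactSpace (hv.fracIdeal 0) := isCompact_iff_compactSpace.mp hcompact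
  have hopen : IsOpen (hv.fracIdeal 1 : Set K) :=
    (hv.fracIdeal 1).isOpen_of_mem_nhds (hbasis.mem_of_mem (i := 1) trivial)
  have : Finite (hv.fracIdeal 0 ⧸ (hv.fracIdeal 1).addSubgroupOf (hv.fracIdeal 0)) :=
    AddSubgroup.quotient_finite_of_isOpen _ (hopen.preimage continuous_subtype_val)
  rw [AddSubgroup.isFiniteRelIndex_iff_finiteIndex]
  exact AddSubgroup.finiteIndex_of_finite_quotient

theorem exists_pow_eq_of_forall_exists_pow_sub_mem {k : ℕ} {z : K}
    (hz : ∀ N : ℕ, ∃ c ∈ hv.fracIdeal 0, c ^ k - z ∈ hv.fracIdeal N) : ∃ c, c ^ k = z := by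
  obtain ⟨_, _, _, hcompact, hbasis⟩ := hv.exists_topology_isCompact_fracIdeal
  have hclosed : IsClosed ((fun c => c ^ k - z) '' (hv.fracIdeal 0 : Set K)) :=
    (hcompact.image (by fun_prop)).isClosed
  have hmem : (0 : K) ∈ closure ((fun c => c ^ k - z) '' (hv.fracIdeal 0 : Set K)) :=
    (mem_closure_iff_nhds_basis hbasis).mpr fun N _ => by
      obtain ⟨c, hc, hcN⟩ := hz N
      exact ⟨c ^ k - z, Set.mem_image_of_mem _ hc, hcN⟩
  rw [hclosed.closure_eq] at hmem
  obtain ⟨c, -, hc⟩ := hmem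
  exact ⟨c, sub_eq_zero.mp hc⟩

theorem exists_pow_prime_eq_one_add {s : ℤ} (hs : v (p : K) = (p - 1) * s) {w : K}
    (hw : w ∈ hv.fracIdeal (p * s + 1)) : ∃ c, c ^ p = 1 + w := by
  have hp2 : (2 : ℤ) ≤ p := mod_cast hp.out.two_le
  have hs0 : 0 < s := pos_of_mul_pos_right (hs ▸ hv.2.2.2) (by omega)
  have hp0 : (p : K) ≠ 0 := by
    simpa using (map_ne_zero (algebraMap ℚ_[p] K)).mpr (Nat.cast_ne_zero.mpr hp.out.ne_zero)
  refine hv.exists_pow_eq_of_forall_exists_pow_sub_mem fun N => ?_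
  obtain ⟨c, hc, hcN⟩ := exists_pow_prime_sub_one_add_mem hp0 hs hs0.le hw N
  have hc0 : c ∈ hv.fracIdeal 0 := by
    simpa using add_mem (mem_mono hc zero_le_one) one_mem
  exact ⟨c, hc0, mem_mono hcN (by nlinarith)⟩

end Topology

section Extension

open Module

variable {p : ℕ} {K L : Type*} [Field K] [Field L] [Algebra K L] {vK : K → ℤ} {vL : L → ℤ}
  {hvK : IsNormalizedVal p K vK} {hvL : IsNormalizedVal p L vL} {e : ℤ}

theorem map_smul (hvL : IsNormalizedVal p L vL) (he : HasRamificationIdx vK vL e) {c : K} {x : L}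
    (hc : c ≠ 0) (hx : x ≠ 0) : vL (c • x) = e * vK c + vL x := by
  rw [Algebra.smul_def, hvL.map_mul (by simpa using hc) hx, he c hc]

theorem injOn_map_smul (hvL : IsNormalizedVal p L vL) (he : HasRamificationIdx vK vL e) {ι : Type*}
    {f : ι → L} (hf : ∀ i j, e ∣ vL (f i) - vL (f j) → i = j) (c : ι → K) :
    Set.InjOn (fun i => vL (c i • f i)) {i | c i • f i ≠ 0} := by
  intro i hi j hj hij
  obtain ⟨hci, hfi⟩ := smul_ne_zero_iff.mp hi
  obtain ⟨hcj, hfj⟩ := smul_ne_zero_iff.mp hj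
  simp only [hvL.map_smul he hci hfi, hvL.map_smul he hcj hfj] at hij
  exact hf i j ⟨vK (c j) - vK (c i), by linear_combination hij⟩

theorem smul_mem_of_sum_smul_mem (he : HasRamificationIdx vK vL e) {ι : Type*}
    {f : ι → L} (hf : ∀ i j, e ∣ vL (f i) - vL (f j) → i = j) {c : ι → K} {s : Finset ι} {m : ℤ}
    (hsum : ∑ i ∈ s, c i • f i ∈ hvL.fracIdeal m) {i : ι} (hi : i ∈ s) :
    c i • f i ∈ hvL.fracIdeal m :=
  mem_of_sum_mem_of_injOn ((hvL.injOn_map_smul he hf c).mono fun _ h => h.2) hsum hi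

theorem linearIndependent_of_map_incongruent (hvL : IsNormalizedVal p L vL)
    (he : HasRamificationIdx vK vL e) {ι : Type*} {f : ι → L} (hf0 : ∀ i, f i ≠ 0)
    (hf : ∀ i j, e ∣ vL (f i) - vL (f j) → i = j) : LinearIndependent K f := by
  rw [linearIndependent_iff']
  intro s c hc i hi
  have hzero : c i • f i = 0 := eq_zero_of_forall_mem (hv := hvL) fun m =>
    smul_mem_of_sum_smul_mem he hf (hc ▸ zero_mem _) hi
  exact (smul_eq_zero.mp hzero).resolve_right (hf0 i)

theorem eq_of_dvd_map_pow_sub (hvL : IsNormalizedVal p L vL) {d : ℕ} {y : L} (hy : y ≠ 0)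
    (hcop : IsCoprime (d : ℤ) (vL y)) (i j : Fin d)
    (h : (d : ℤ) ∣ vL (y ^ (i : ℕ)) - vL (y ^ (j : ℕ))) : i = j := by
  rw [hvL.map_pow hy, hvL.map_pow hy, ← sub_mul] at h
  have hij := Int.eq_zero_of_abs_lt_dvd (hcop.dvd_of_dvd_mul_right h) (by rw [abs_lt]; omega)
  exact Fin.ext (by omega)

theorem ramificationIdx_le_finrank [FiniteDimensional K L] (hvL : IsNormalizedVal p L vL)
    (he : HasRamificationIdx vK vL e) : e ≤ finrank K L := by
  rcases le_or_gt e 0 with hneg | hpos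
  · exact hneg.trans (Int.natCast_nonneg _)
  lift e to ℕ using hpos.le
  obtain ⟨π, hπ0, hπ⟩ := hvL.2.2.1
  have hind := hvL.linearIndependent_of_map_incongruent he (fun i : Fin e => pow_ne_zero i hπ0)
    (hvL.eq_of_dvd_map_pow_sub hπ0 (hπ ▸ isCoprime_one_right))
  simpa using hind.fintype_card_le_finrank

theorem mem_of_algebraMap_mem (he : HasRamificationIdx vK vL e) (he0 : 0 < e) {x : K} {m j : ℤ}
    (hmj : e * (m - 1) < j) (hx : algebraMap K L x ∈ hvL.fracIdeal j) : x ∈ hvK.fracIdeal m := by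
  intro hx0
  have hle : j ≤ e * vK x := he x hx0 ▸ hx (by simpa using hx0)
  have := lt_of_mul_lt_mul_left (hmj.trans_le hle) he0.le
  omega

section TotallyRamified

variable [FiniteDimensional K L] (he : HasRamificationIdx vK vL (finrank K L)) {y : L} (hy : y ≠ 0)
  (hcop : IsCoprime (finrank K L : ℤ) (vL y))
include he hy hcop

theorem exists_eq_sum_smul_pow (hvL : IsNormalizedVal p L vL) (z : L) :
    ∃ c : Fin (finrank K L) → K, z = ∑ i, c i • y ^ (i : ℕ) ∧
      ∀ m, z ∈ hvL.fracIdeal m → ∀ i, c i • y ^ (i : ℕ) ∈ hvL.fracIdeal m := by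
  have hinj := hvL.eq_of_dvd_map_pow_sub hy hcop
  have hind := hvL.linearIndependent_of_map_incongruent he (fun i => pow_ne_zero _ hy) hinj
  have hz : z ∈ Submodule.span K (Set.range fun i : Fin (finrank K L) => y ^ (i : ℕ)) := by
    rw [hind.span_eq_top_of_card_eq_finrank' (Fintype.card_fin _)]
    trivial
  obtain ⟨c, rfl⟩ := (Submodule.mem_span_range_iff_exists_fun K).mp hz
  exact ⟨c, rfl, fun m hm i => smul_mem_of_sum_smul_mem he hinj hm (Finset.mem_univ i)⟩

theorem algEquiv_mem (hinv : ∀ τ : Gal(L/K), vL (τ y) = vL y) (τ : Gal(L/K)) {m : ℤ} {z : L}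
    (hz : z ∈ hvL.fracIdeal m) : τ z ∈ hvL.fracIdeal m := by
  obtain ⟨c, hsum, hc⟩ := exists_eq_sum_smul_pow he hy hcop hvL z
  rw [hsum, map_sum]
  refine sum_mem fun i _ hi => ?_
  have hτy : τ y ≠ 0 := by simpa using hy
  rw [_root_.map_smul, _root_.map_pow] at hi ⊢
  have hci : c i ≠ 0 := left_ne_zero_of_smul hi
  have hle := hc m hz i (smul_ne_zero hci (pow_ne_zero _ hy))
  rwa [hvL.map_smul he hci (pow_ne_zero _ hy), hvL.map_pow hy, ← hinv τ, ← hvL.map_pow hτy,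
    ← hvL.map_smul he hci (pow_ne_zero _ hτy)] at hle

theorem map_algEquiv (hvL : IsNormalizedVal p L vL) (hinv : ∀ τ : Gal(L/K), vL (τ y) = vL y)
    (τ : Gal(L/K)) {z : L} (hz : z ≠ 0) : vL (τ z) = vL z := by
  refine le_antisymm ?_ (algEquiv_mem he hy hcop hinv τ (hvL.mem_self z) (by simpa using hz))
  have := algEquiv_mem he hy hcop hinv τ.symm (hvL.mem_self (τ z))
  rw [AlgEquiv.symm_apply_apply] at this
  exact this hz

theorem map_norm [IsGalois K L] (hvL : IsNormalizedVal p L vL)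
    (hinv : ∀ τ : Gal(L/K), vL (τ y) = vL y) {z : L} (hz : z ≠ 0) :
    vK (Algebra.norm K z) = vL z := by
  have hd : (finrank K L : ℤ) ≠ 0 := mod_cast finrank_pos.ne'
  have hN0 : Algebra.norm K z ≠ 0 := Algebra.norm_ne_zero_iff.mpr hz
  refine mul_left_cancel₀ hd ?_
  rw [← he _ hN0, Algebra.norm_eq_prod_automorphisms, hvL.map_prod _ fun τ _ => by simpa using hz,
    Finset.sum_congr rfl fun τ _ => hvL.map_algEquiv he hy hcop hinv τ hz, Finset.sum_const,
    Finset.card_univ, nsmul_eq_mul, ← Nat.card_eq_fintype_card, IsGalois.card_aut_eq_finrank]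

theorem exists_sub_smul_one_mem {z : L} (hz : z ∈ hvL.fracIdeal 0) :
    ∃ c ∈ hvK.fracIdeal 0, z - c • (1 : L) ∈ hvL.fracIdeal 1 := by
  have hd : 0 < finrank K L := finrank_pos
  obtain ⟨c, hsum, hc⟩ := exists_eq_sum_smul_pow he hy hcop hvL z
  have hc := hc 0 hz
  let zero : Fin (finrank K L) := ⟨0, hd⟩
  refine ⟨c zero, mem_of_algebraMap_mem (hvL := hvL) he (j := 0) (by omega) (by omega) ?_, ?_⟩
  · simpa [zero, Algebra.smul_def] using hc zero
  have htail : z - c zero • (1 : L) = ∑ i ∈ Finset.univ.erase zero, c i • y ^ (i : ℕ) := by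
    rw [hsum, ← Finset.add_sum_erase _ _ (Finset.mem_univ zero), pow_zero, add_sub_cancel_left]
  rw [htail]
  refine sum_mem fun i hi hne => ?_
  have hvi : vL (c i • y ^ (i : ℕ)) ≠ 0 := fun h => by
    have hci : c i ≠ 0 := left_ne_zero_of_smul hne
    rw [hvL.map_smul he hci (pow_ne_zero _ hy), hvL.map_pow hy] at h
    refine Finset.ne_of_mem_erase hi (hvL.eq_of_dvd_map_pow_sub hy hcop i zero ?_)
    rw [hvL.map_pow hy, pow_zero, hvL.map_one, sub_zero]
    exact ⟨-vK (c i), by linear_combination h⟩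
  have := hc i hne
  omega

theorem exists_sub_smul_mem {η z : L} (hη : η ≠ 0) (hz : z ∈ hvL.fracIdeal (vL η)) :
    ∃ c ∈ hvK.fracIdeal 0, z - c • η ∈ hvL.fracIdeal (vL η + 1) := by
  have hquot : z / η ∈ hvL.fracIdeal 0 := by simpa using div_mem hz hη
  obtain ⟨c, hc, hmem⟩ := exists_sub_smul_one_mem (hvK := hvK) he hy hcop hquot
  refine ⟨c, hc, ?_⟩
  rw [← mul_mem_iff hη] at hmem
  convert hmem using 1
  rw [mul_sub, mul_div_cancel₀ _ hη, mul_smul_comm, mul_one]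

end TotallyRamified

end Extension

section Norm

open Module

variable {p : ℕ} [hp : Fact p.Prime] {K L : Type*} [Field K] [Field L] [Algebra K L]
  [FiniteDimensional K L] [IsGalois K L] {vK : K → ℤ} {vL : L → ℤ}
  {hvK : IsNormalizedVal p K vK} {hvL : IsNormalizedVal p L vL}

theorem algebraMap_norm_one_add_sub_mem {d m : ℤ} (hdeg : finrank K L = p)
    (hinv : ∀ (τ : Gal(L/K)) {z : L}, z ≠ 0 → vL (τ z) = vL z)
    (htrace : ∀ {m : ℤ} {z : L}, z ∈ hvL.fracIdeal m →
      algebraMap K L (Algebra.trace K L z) ∈ hvL.fracIdeal (m + d))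
    (hm : 0 ≤ m) {z : L} (hz : z ∈ hvL.fracIdeal m) :
    algebraMap K L (Algebra.norm K (1 + z) - (1 + Algebra.norm K z)) ∈ hvL.fracIdeal (m + d) := by
  simp only [map_sub, map_add, _root_.map_one, Algebra.norm_eq_prod_automorphisms]
  refine prod_one_add_sub_mem hm ?_ (fun τ hτ => ?_) fun b _ => ?_
  · rw [← Nat.card_eq_fintype_card, IsGalois.card_aut_eq_finrank, hdeg]
  · have hz0 : z ≠ 0 := by simpa using hτ
    exact (hz hz0).trans_eq (hinv τ hz0).symm
  · simpa only [trace_eq_sum_automorphisms, _root_.map_pow] using htrace (pow_mem hz b)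

variable {t : ℤ} (hdeg : finrank K L = p) (he : HasRamificationIdx vK vL p)
  (hinv : ∀ (τ : Gal(L/K)) {z : L}, z ≠ 0 → vL (τ z) = vL z)
  (hnorm : ∀ {z : L}, z ≠ 0 → vK (Algebra.norm K z) = vL z)
  (htrace : ∀ {m : ℤ} {z : L}, z ∈ hvL.fracIdeal m →
    algebraMap K L (Algebra.trace K L z) ∈ hvL.fracIdeal (m + (p - 1) * t))
include hdeg he hinv hnorm htrace

theorem norm_one_add_sub_one_mem (ht : 0 ≤ t) {z : L} (hz : z ∈ hvL.fracIdeal (t + 1)) :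
    Algebra.norm K (1 + z) - 1 ∈ hvK.fracIdeal (t + 1) := by
  have hN : Algebra.norm K z ∈ hvK.fracIdeal (t + 1) := fun hN0 => by
    have hz0 : z ≠ 0 := Algebra.norm_ne_zero_iff.mp hN0
    exact (hz hz0).trans_eq (hnorm hz0).symm
  have hcross : Algebra.norm K (1 + z) - (1 + Algebra.norm K z) ∈ hvK.fracIdeal (t + 1) :=
    mem_of_algebraMap_mem he (mod_cast hp.out.pos) (by linarith)
      (algebraMap_norm_one_add_sub_mem hdeg hinv htrace (by omega) hz)
  convert add_mem hcross hN using 1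
  ring

theorem mem_of_norm_one_add_sub_one_mem (ht : 1 ≤ t) {z : L} (hz : 1 + z ≠ 0)
    (hN : Algebra.norm K (1 + z) - 1 ∈ hvK.fracIdeal t) : z ∈ hvL.fracIdeal t := by
  intro hz0
  by_contra! hlt
  have hp2 : (2 : ℤ) ≤ p := mod_cast hp.out.two_le
  have hunit : vL (1 + z) = 0 := by
    rw [← hnorm hz]
    exact (map_eq_zero_of_sub_one_mem (mem_mono hN ht)).2
  have hz_int : 0 ≤ vL z := by
    have : z ∈ hvL.fracIdeal 0 := by
      simpa using sub_mem (mem_of_le (hv := hvL) hunit.ge) one_mem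
    exact this hz0
  have hcross : Algebra.norm K (1 + z) - (1 + Algebra.norm K z) ∈ hvK.fracIdeal (vL z + 1) :=
    mem_of_algebraMap_mem he (by omega) (by nlinarith)
      (algebraMap_norm_one_add_sub_mem hdeg hinv htrace hz_int (hvL.mem_self z))
  have hNz : Algebra.norm K z ∈ hvK.fracIdeal (vL z + 1) := by
    convert sub_mem (mem_mono (k := vL z + 1) hN (by omega)) hcross using 1
    ring
  have := hNz (Algebra.norm_ne_zero_iff.mpr hz0)
  rw [hnorm hz0] at this
  omega

end Norm

end IsNormalizedVal

/-- `L = K(θ)` is the Kummer extension with `θ ^ p = 1 + a`, where `a` is integral, `vK a` is prime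
to `p` and `vK a < p * vK (ζ - 1)`; the bound is the paper's `n < p * e_K / (p - 1)`, because
`vK p = (p - 1) * vK (ζ - 1)`. The valuation on `L` extends that on `K` with some ramification
index. -/
structure IsRamifiedKummer (p : ℕ) {K L : Type*} [Field K] [Field L] [Algebra K L] (vK : K → ℤ)
    (vL : L → ℤ) (ζ a : K) (θ : L) : Prop where
  valK : IsNormalizedVal p K vK
  valL : IsNormalizedVal p L vL
  exists_ramificationIdx : ∃ e : ℤ, 0 < e ∧ HasRamificationIdx vK vL e
  primitiveRoot : IsPrimitiveRoot ζ p
  ne_zero : a ≠ 0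
  nonneg : 0 ≤ vK a
  not_dvd : ¬ (p : ℤ) ∣ vK a
  lt : vK a < p * vK (ζ - 1)
  pow_eq : θ ^ p = algebraMap K L (1 + a)
  adjoin_eq_top : IntermediateField.adjoin K {θ} = ⊤

namespace IsRamifiedKummer

open Module IsNormalizedVal

variable {p : ℕ} [hp : Fact p.Prime] {K L : Type*} [Field K] [Field L] [Algebra K L] {vK : K → ℤ}
  {vL : L → ℤ} {ζ a : K} {θ : L} (h : IsRamifiedKummer p vK vL ζ a θ)
include h

theorem prime_ne_zero_and_map_prime : (p : K) ≠ 0 ∧ vK p = (p - 1) * vK (ζ - 1) :=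
  h.valK.map_prime_eq_mul_map_primitiveRoot_sub_one h.primitiveRoot

theorem zeta_sub_one_ne_zero : ζ - 1 ≠ 0 :=
  sub_ne_zero.mpr (h.primitiveRoot.ne_one hp.out.one_lt)

theorem map_root_sub_one_of_hasRamificationIdx {e : ℤ} (he0 : 0 < e)
    (he : HasRamificationIdx vK vL e) {ξ : L} (hξ : ξ ^ p = algebraMap K L (1 + a)) :
    ξ - 1 ≠ 0 ∧ p * vL (ξ - 1) = e * vK a := by
  obtain ⟨hp0, hvp⟩ := h.prime_ne_zero_and_map_prime
  have hvpL : vL (p : L) = (p - 1) * (e * vK (ζ - 1)) := by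
    rw [← map_natCast (algebraMap K L), he _ hp0, hvp]
    ring
  have hva := he a h.ne_zero
  rw [← hva]
  refine h.valL.map_sub_one_of_pow_prime_eq hvpL (by simpa using h.ne_zero)
    (hva ▸ mul_nonneg he0.le h.nonneg) ?_ (by simpa using hξ)
  rw [hva, mul_left_comm]
  exact mul_lt_mul_of_pos_left h.lt he0

theorem finiteDimensional : FiniteDimensional K L :=
  (finiteDimensional_and_finrank_le_of_pow_eq h.adjoin_eq_top hp.out.ne_zero h.pow_eq).1

theorem finrank_eq_and_hasRamificationIdx :
    finrank K L = p ∧ HasRamificationIdx vK vL (p : ℤ) := by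
  obtain ⟨e, he0, he⟩ := h.exists_ramificationIdx
  obtain ⟨_, hle⟩ :=
    finiteDimensional_and_finrank_le_of_pow_eq h.adjoin_eq_top hp.out.ne_zero h.pow_eq
  have hroot := (h.map_root_sub_one_of_hasRamificationIdx he0 he h.pow_eq).2
  have hdvd : (p : ℤ) ∣ e := ((Nat.prime_iff_prime_int.mp hp.out).dvd_or_dvd
    (Dvd.intro _ hroot)).resolve_right h.not_dvd
  have hple := Int.le_of_dvd he0 hdvd
  have hele := h.valL.ramificationIdx_le_finrank he
  obtain rfl : e = p := by omega
  exact ⟨by omega, he⟩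

theorem finrank_eq : finrank K L = p :=
  h.finrank_eq_and_hasRamificationIdx.1

theorem hasRamificationIdx : HasRamificationIdx vK vL (p : ℤ) :=
  h.finrank_eq_and_hasRamificationIdx.2

theorem map_root_sub_one {ξ : L} (hξ : ξ ^ p = algebraMap K L (1 + a)) :
    ξ - 1 ≠ 0 ∧ vL (ξ - 1) = vK a := by
  have hp0 : (0 : ℤ) < p := mod_cast hp.out.pos
  obtain ⟨hne, hval⟩ := h.map_root_sub_one_of_hasRamificationIdx hp0 h.hasRamificationIdx hξ
  exact ⟨hne, mul_left_cancel₀ hp0.ne' hval⟩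

theorem map_one_sub_root : 1 - θ ≠ 0 ∧ vL (1 - θ) = vK a := by
  obtain ⟨hne, hval⟩ := h.map_root_sub_one h.pow_eq
  rw [← neg_sub, neg_ne_zero, h.valL.map_neg hne]
  exact ⟨hne, hval⟩

theorem isCoprime : IsCoprime (finrank K L : ℤ) (vL (θ - 1)) := by
  rw [h.finrank_eq, (h.map_root_sub_one h.pow_eq).2]
  exact (Nat.prime_iff_prime_int.mp hp.out).coprime_iff_not_dvd.mpr h.not_dvd

theorem isGalois : IsGalois K L := by
  have := h.finiteDimensional
  refine isGalois_of_pow_finrank_eq h.adjoin_eq_top (κ := 1 + a) (ζ := ζ) ?_ ?_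
  · rw [h.finrank_eq, h.pow_eq]
  · rw [h.finrank_eq]
    exact h.primitiveRoot

theorem map_algEquiv_root_sub_one (τ : Gal(L/K)) : vL (τ (θ - 1)) = vL (θ - 1) := by
  rw [map_sub, _root_.map_one, (h.map_root_sub_one h.pow_eq).2]
  refine (h.map_root_sub_one ?_).2
  rw [← _root_.map_pow, h.pow_eq, AlgEquiv.commutes]

theorem map_algEquiv (τ : Gal(L/K)) {z : L} (hz : z ≠ 0) : vL (τ z) = vL z := by
  have := h.finiteDimensional
  exact h.valL.map_algEquiv (h.finrank_eq.symm ▸ h.hasRamificationIdx)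
    (h.map_root_sub_one h.pow_eq).1 h.isCoprime h.map_algEquiv_root_sub_one τ hz

theorem map_norm {z : L} (hz : z ≠ 0) : vK (Algebra.norm K z) = vL z := by
  have := h.finiteDimensional
  have := h.isGalois
  exact h.valL.map_norm (h.finrank_eq.symm ▸ h.hasRamificationIdx)
    (h.map_root_sub_one h.pow_eq).1 h.isCoprime h.map_algEquiv_root_sub_one hz

theorem exists_sub_smul_mem {η z : L} (hη : η ≠ 0) (hz : z ∈ h.valL.fracIdeal (vL η)) :
    ∃ c ∈ h.valK.fracIdeal 0, z - c • η ∈ h.valL.fracIdeal (vL η + 1) := by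
  have := h.finiteDimensional
  exact IsNormalizedVal.exists_sub_smul_mem (h.finrank_eq.symm ▸ h.hasRamificationIdx)
    (h.map_root_sub_one h.pow_eq).1 h.isCoprime hη hz

theorem trace_root_sub_one_pow {i : ℕ} (hi : i < finrank K L) :
    Algebra.trace K L ((θ - 1) ^ i) = (-1) ^ i * p := by
  have := h.finiteDimensional
  rw [trace_sub_one_pow_of_pow_finrank_eq h.adjoin_eq_top (κ := 1 + a) (ζ := ζ) ?_ ?_ hi,
    h.finrank_eq]
  · rw [h.finrank_eq, h.pow_eq]
  · rw [h.finrank_eq]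
    exact h.primitiveRoot

theorem algebraMap_trace_mem {m : ℤ} {z : L} (hz : z ∈ h.valL.fracIdeal m) :
    algebraMap K L (Algebra.trace K L z) ∈
      h.valL.fracIdeal (m + (p - 1) * (p * vK (ζ - 1) - vK a)) := by
  have := h.finiteDimensional
  obtain ⟨hp0, hvp⟩ := h.prime_ne_zero_and_map_prime
  obtain ⟨hy0, hvy⟩ := h.map_root_sub_one h.pow_eq
  have hvpL : vL (p : L) = p * ((p - 1) * vK (ζ - 1)) := by
    rw [← map_natCast (algebraMap K L), h.hasRamificationIdx _ hp0, hvp]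
  obtain ⟨c, hsum, hc⟩ := exists_eq_sum_smul_pow (h.finrank_eq.symm ▸ h.hasRamificationIdx)
    hy0 h.isCoprime h.valL z
  rw [hsum, map_sum, map_sum]
  refine sum_mem fun i _ => ?_
  have hterm : algebraMap K L (Algebra.trace K L (c i • (θ - 1) ^ (i : ℕ))) =
      (-1) ^ (i : ℕ) * ((c i • (θ - 1) ^ (i : ℕ)) / (θ - 1) ^ (i : ℕ) * p) := by
    rw [_root_.map_smul, h.trace_root_sub_one_pow i.2, smul_eq_mul,
      Algebra.smul_def (c i) ((θ - 1) ^ (i : ℕ)), mul_div_cancel_right₀ _ (pow_ne_zero _ hy0)]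
    simp only [_root_.map_mul, _root_.map_pow, _root_.map_neg, _root_.map_one, map_natCast]
    ring
  rw [hterm]
  refine neg_one_pow_mul_mem (mem_mono (mul_mem (div_mem (hc m hz i) (pow_ne_zero _ hy0))
    (h.valL.mem_self (p : L))) ?_) _
  have hi : (i : ℤ) ≤ p - 1 := by
    have := i.2.trans_eq h.finrank_eq
    omega
  rw [h.valL.map_pow hy0, hvy, hvpL]
  nlinarith [mul_le_mul_of_nonneg_right hi h.nonneg]

theorem norm_algebraMap_sub_root (c : K) :
    Algebra.norm K (algebraMap K L c - θ) = c ^ p - (1 + a) := by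
  have := h.finiteDimensional
  rw [norm_algebraMap_sub_of_pow_finrank_eq h.adjoin_eq_top (κ := 1 + a), h.finrank_eq]
  rw [h.finrank_eq, h.pow_eq]

theorem mul_norm_div_one_sub_root_sub_one (c : K) :
    a * (Algebra.norm K ((algebraMap K L c - θ) / (1 - θ)) - 1) = 1 - c ^ p := by
  have hone : Algebra.norm K (1 - θ) = -a := by
    simpa using h.norm_algebraMap_sub_root 1
  have hmul : Algebra.norm K ((algebraMap K L c - θ) / (1 - θ)) * Algebra.norm K (1 - θ) =
      c ^ p - (1 + a) := by
    rw [← _root_.map_mul, div_mul_cancel₀ _ h.map_one_sub_root.1, h.norm_algebraMap_sub_root]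
  rw [hone] at hmul
  linear_combination -hmul

theorem exists_norm_eq_of_sub_one_mem [Algebra ℚ_[p] K] [FiniteDimensional ℚ_[p] K] {u : K}
    (hu : u - 1 ∈ h.valK.fracIdeal (p * vK (ζ - 1) - vK a + 1)) :
    ∃ x : L, x ≠ 0 ∧ Algebra.norm K x = u := by
  have := h.finiteDimensional
  have hw : -(a * (u - 1)) ∈ h.valK.fracIdeal (p * vK (ζ - 1) + 1) :=
    neg_mem (mem_mono (mul_mem (h.valK.mem_self a) hu) (by omega))
  obtain ⟨c, hc⟩ := h.valK.exists_pow_prime_eq_one_add h.prime_ne_zero_and_map_prime.2 hw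
  have hnorm : Algebra.norm K ((algebraMap K L c - θ) / (1 - θ)) = u :=
    mul_left_cancel₀ h.ne_zero
      (by linear_combination h.mul_norm_div_one_sub_root_sub_one c - hc)
  have hu0 : u ≠ 0 := (map_eq_zero_of_sub_one_mem (mem_mono hu (by linarith [h.lt]))).1
  exact ⟨_, fun hx => hu0 (by rw [← hnorm, hx, Algebra.norm_zero]), hnorm⟩

theorem norm_sub_norm_mem {x q : L} (hq : q ≠ 0) (hvq : vL q = 0)
    (hxq : x - q ∈ h.valL.fracIdeal (p * vK (ζ - 1) - vK a + 1)) :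
    Algebra.norm K x - Algebra.norm K q ∈ h.valK.fracIdeal (p * vK (ζ - 1) - vK a + 1) := by
  have := h.finiteDimensional
  have := h.isGalois
  have hquot : (x - q) / q ∈ h.valL.fracIdeal (p * vK (ζ - 1) - vK a + 1) := by
    simpa only [hvq, sub_zero] using div_mem hxq hq
  have hnorm := norm_one_add_sub_one_mem (hvK := h.valK) h.finrank_eq h.hasRamificationIdx
    h.map_algEquiv h.map_norm h.algebraMap_trace_mem (by linarith [h.lt]) hquot
  have hNq : vK (Algebra.norm K q) = 0 := (h.map_norm hq).trans hvq
  convert mul_mem (mem_of_le (hv := h.valK) hNq.ge) hnorm using 1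
  · rw [zero_add]
  · rw [mul_sub, mul_one, ← _root_.map_mul, mul_add, mul_one, mul_div_cancel₀ _ hq,
      add_sub_cancel]

theorem sub_one_mem_of_norm_sub_one_mem {x : L} (hx : x ≠ 0)
    (hN : Algebra.norm K x - 1 ∈ h.valK.fracIdeal (p * vK (ζ - 1) - vK a)) :
    x - 1 ∈ h.valL.fracIdeal (p * vK (ζ - 1) - vK a) := by
  have := h.finiteDimensional
  have := h.isGalois
  exact mem_of_norm_one_add_sub_one_mem (hvK := h.valK) h.finrank_eq h.hasRamificationIdx
    h.map_algEquiv h.map_norm h.algebraMap_trace_mem (by linarith [h.lt]) (by simpa using hx)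
    (by simpa using hN)

-- `(1 + (ζ - 1) * c - θ) / (1 - θ) - 1 = c * η` for `η = (ζ - 1) / (1 - θ)`, which has valuation
-- `p * vK (ζ - 1) - vK a`, and `L / K` has no residue extension.
theorem exists_sub_div_one_sub_root_mem {x : L}
    (hx : x - 1 ∈ h.valL.fracIdeal (p * vK (ζ - 1) - vK a)) :
    ∃ c ∈ h.valK.fracIdeal 0, x - (algebraMap K L (1 + (ζ - 1) * c) - θ) / (1 - θ) ∈
      h.valL.fracIdeal (p * vK (ζ - 1) - vK a + 1) := by
  have hl := h.zeta_sub_one_ne_zero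
  have hlL : algebraMap K L (ζ - 1) ≠ 0 := (map_ne_zero (algebraMap K L)).mpr hl
  obtain ⟨hθ, hvθ⟩ := h.map_one_sub_root
  have hvη : vL (algebraMap K L (ζ - 1) / (1 - θ)) = p * vK (ζ - 1) - vK a := by
    rw [h.valL.map_div hlL hθ, h.hasRamificationIdx _ hl, hvθ]
  obtain ⟨c, hc, hcx⟩ := h.exists_sub_smul_mem (div_ne_zero hlL hθ) (hvη ▸ hx)
  refine ⟨c, hc, ?_⟩
  convert hvη ▸ hcx using 1
  simp only [Algebra.smul_def, map_add, _root_.map_mul, _root_.map_one]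
  field_simp
  ring

theorem exists_pow_sub_mem_of_norm_sub_one_mem {x : L} (hx : x ≠ 0)
    (hN : Algebra.norm K x - 1 ∈ h.valK.fracIdeal (p * vK (ζ - 1) - vK a)) :
    ∃ c ∈ h.valK.fracIdeal 0,
      (1 + (ζ - 1) * c) ^ p - (1 - a * (Algebra.norm K x - 1)) ∈
        h.valK.fracIdeal (p * vK (ζ - 1) + 1) := by
  have hlt := h.lt
  have hx1 := h.sub_one_mem_of_norm_sub_one_mem hx hN
  obtain ⟨c, hc, hcx⟩ := h.exists_sub_div_one_sub_root_mem hx1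
  have hq1 : (algebraMap K L (1 + (ζ - 1) * c) - θ) / (1 - θ) - 1 ∈ h.valL.fracIdeal 1 := by
    rw [← sub_sub_sub_cancel_left _ _ x]
    exact sub_mem (mem_mono hx1 (by omega)) (mem_mono hcx (by omega))
  obtain ⟨hq0, hvq⟩ := map_eq_zero_of_sub_one_mem hq1
  refine ⟨c, hc, ?_⟩
  convert mem_mono (k := p * vK (ζ - 1) + 1)
    (mul_mem (h.valK.mem_self a) (h.norm_sub_norm_mem hq0 hvq hcx)) (by omega) using 1
  linear_combination h.mul_norm_div_one_sub_root_sub_one (1 + (ζ - 1) * c)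

theorem exists_sub_one_mem_and_forall_norm_ne [Algebra ℚ_[p] K] [FiniteDimensional ℚ_[p] K] :
    ∃ u : K, u - 1 ∈ h.valK.fracIdeal (p * vK (ζ - 1) - vK a) ∧
      ∀ x : L, x ≠ 0 → Algebra.norm K x ≠ u := by
  have := h.valK.isFiniteRelIndex_fracIdeal
  obtain ⟨w, hw, hwpow⟩ :=
    exists_forall_one_add_mul_pow_sub_notMem (hv := h.valK) h.primitiveRoot
  have hb : 1 - w / a - 1 ∈ h.valK.fracIdeal (p * vK (ζ - 1) - vK a) := by
    rw [sub_sub_cancel_left]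
    exact neg_mem (div_mem hw h.ne_zero)
  refine ⟨1 - w / a, hb, fun x hx hN => ?_⟩
  obtain ⟨c, hc, hcmem⟩ := h.exists_pow_sub_mem_of_norm_sub_one_mem hx (hN ▸ hb)
  refine hwpow c hc ?_
  rwa [hN, sub_sub_cancel_left, mul_neg, mul_div_cancel₀ _ h.ne_zero, sub_neg_eq_add] at hcmem

end IsRamifiedKummer

theorem condExp_eq_add_one {p : ℕ} {K : Type*} [Field K] {vK : K → ℤ} (hvK : IsNormalizedVal p K vK)
    {L : Type v} [Field L] [Algebra K L] {t : ℕ} (ht : 0 < t)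
    (hnorm : ∀ u : K, u - 1 ∈ hvK.fracIdeal (t + 1) → ∃ x : L, x ≠ 0 ∧ Algebra.norm K x = u)
    {u : K} (hu : u - 1 ∈ hvK.fracIdeal t) (hne : ∀ x : L, x ≠ 0 → Algebra.norm K x ≠ u) :
    condExp vK L = t + 1 := by
  obtain ⟨hu0, hvu⟩ := IsNormalizedVal.map_eq_zero_of_sub_one_mem
    (IsNormalizedVal.mem_mono hu (by omega : (1 : ℤ) ≤ t))
  have hmem : t + 1 ∈ {n : ℕ | ∀ u : K, u ≠ 0 → vK u = 0 →
      (n = 0 ∨ u = 1 ∨ (n : ℤ) ≤ vK (u - 1)) → ∃ x : L, x ≠ 0 ∧ Algebra.norm K x = u} := by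
    rintro u - - (h | rfl | h)
    · omega
    · exact ⟨1, one_ne_zero, _root_.map_one _⟩
    · exact hnorm u fun _ => mod_cast h
  refine le_antisymm (Nat.sInf_le hmem) (le_csInf ⟨_, hmem⟩ fun n hn => ?_)
  by_contra! hlt
  have hcases : u = 1 ∨ (n : ℤ) ≤ vK (u - 1) := or_iff_not_imp_left.mpr fun hu1 => by
    have := hu (sub_ne_zero.mpr hu1)
    omega
  obtain ⟨x, hx, hxu⟩ := hn u hu0 hvu (Or.inr hcases)
  exact hne x hx hxu

/-- Let `K` be a `p`-adic field containing `μ_p` and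
`κ = 1 + u·π_K^n` with `u` a unit, `1 ≤ n < p·e_K/(p−1)`, and `p ∤ n`.  Then
`L = K(κ^{1/p})` is totally ramified of degree `p` over `K` with abelian conductor
exponent `f(L/K) = p·e_K/(p−1) − n + 1` (expressed as
`(p−1)·(f(L/K) + n − 1) = p·e_K`). -/
theorem kummer_extension_unit_conductor
    (p : ℕ) [Fact p.Prime]
    (K : Type*) [Field K] [Algebra ℚ_[p] K] [FiniteDimensional ℚ_[p] K]
    (vK : K → ℤ) (hvK : IsNormalizedVal p K vK)
    (hμ : ∃ ζ : K, IsPrimitiveRoot ζ p)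
    (π u : K) (hπ0 : π ≠ 0) (hπ : vK π = 1) (hu0 : u ≠ 0) (hu : vK u = 0)
    (n : ℕ) (hn1 : 1 ≤ n) (hnp : ¬ (p ∣ n))
    (hnlt : ((p : ℤ) - 1) * n < (p : ℤ) * vK ((p : K)))
    (κ : K) (hκdef : κ = 1 + u * π ^ n)
    (L : Type v) [Field L] [Algebra K L]
    (θ : L) (hθ : θ ^ p = algebraMap K L κ)
    (hLθ : IntermediateField.adjoin K {θ} = ⊤)
    (vL : L → ℤ) (hvL : IsNormalizedVal p L vL)
    (hext : ∃ e : ℤ, 0 < e ∧ ∀ x : K, x ≠ 0 → vL (algebraMap K L x) = e * vK x) :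
    Module.finrank K L = p ∧
    (∀ x : K, x ≠ 0 → vL (algebraMap K L x) = (p : ℤ) * vK x) ∧
    ((p : ℤ) - 1) * ((condExp vK L : ℤ) + n - 1) = (p : ℤ) * vK ((p : K)) := by
  obtain ⟨ζ, hζ⟩ := hμ
  obtain ⟨-, hvp⟩ := hvK.map_prime_eq_mul_map_primitiveRoot_sub_one hζ
  have hp2 : (2 : ℤ) ≤ p := mod_cast (Fact.out : p.Prime).two_le
  have hva : vK (u * π ^ n) = n := by
    rw [hvK.map_mul hu0 (pow_ne_zero n hπ0), hvK.map_pow hπ0, hu, hπ, zero_add, mul_one]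
  have hnlt' : (n : ℤ) < p * vK (ζ - 1) := by
    rw [hvp, mul_left_comm] at hnlt
    exact lt_of_mul_lt_mul_left hnlt (by omega)
  have h : IsRamifiedKummer p vK vL ζ (u * π ^ n) θ :=
    ⟨hvK, hvL, hext, hζ, mul_ne_zero hu0 (pow_ne_zero n hπ0), by omega,
      by rwa [hva, Int.natCast_dvd_natCast], by rwa [hva], hκdef ▸ hθ, hLθ⟩
  refine ⟨h.finrank_eq, h.hasRamificationIdx, ?_⟩
  obtain ⟨t, ht⟩ := Int.eq_ofNat_of_zero_le (sub_nonneg.mpr h.lt.le)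
  obtain ⟨w, hw, hwnorm⟩ := h.exists_sub_one_mem_and_forall_norm_ne
  have hcond : condExp vK L = t + 1 := condExp_eq_add_one hvK (by omega)
    (fun _ hx => h.exists_norm_eq_of_sub_one_mem (ht ▸ hx)) (ht ▸ hw) hwnorm
  rw [hcond, hvp]
  push_cast
  linear_combination (p - 1 : ℤ) * (-hva - ht)
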